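/- arXiv:1502.03184 — 2 statements merged into one kernel-verified Lean document; each statement's English description precedes it below -/
import Mathlib

section
/- Let f ∈ R be homogeneous, write τ = τ(f^{1−1/p}), and let e ≥ 0. If r ∈ R is a homogeneous element with r ∈ (m^{[e]} : τ) and r ∉ m^{[e]}, then (x_0⋯x_n)^{p^{e+1}−p^e}·r ∈ (m^{[e+1]} : τ) and (x_0⋯x_n)^{p^{e+1}−p^e}·r ∉ m^{[e+1]}. -/
/-!
For `q` a power of the characteristic, `m^{[q]}` is the monomial ideal generated by the `X i ^ q`, so
a polynomial lies in it iff each of its monomials has some exponent `≥ q`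
(`mem_bracketPow_mxI_iff`). Multiplication by `(∏ X i) ^ c` raises every exponent of every monomial
by `c`, so for `q = p ^ e` and `q' = p ^ (e + 1)` one has `(∏ X i) ^ (q' - q) * g ∈ m^{[q']} ↔ g ∈ m^{[q]}`
(`prod_pow_mul_mem_iff`). Applied to `g = r` and to `g = r * t` with `t ∈ τ`, this gives both claims.
-/

open MvPolynomial

noncomputable section

/-- `I^{[e]}`-style bracket power: the ideal generated by `q`-th powers of elements of `I`. -/
def bracketPow {A : Type*} [CommRing A] (I : Ideal A) (q : ℕ) : Ideal A :=
  Ideal.span ((fun u => u ^ q) '' (I : Set A))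

/-- The test ideal `τ(f^{1 - 1/p^e})`: the smallest ideal `a` with `f^{p^e - 1} ∈ a^{[e]}`. -/
def testIdeal {A : Type*} [CommRing A] (p : ℕ) (f : A) (e : ℕ) : Ideal A :=
  sInf {a : Ideal A | f ^ (p ^ e - 1) ∈ bracketPow a (p ^ e)}

/-- The homogeneous maximal ideal `m = (x_0, ..., x_n)`. -/
def mxI (k : Type*) [Field k] (n : ℕ) : Ideal (MvPolynomial (Fin (n + 1)) k) :=
  Ideal.span (Set.range (X : Fin (n + 1) → MvPolynomial (Fin (n + 1)) k))

/-- The set of degrees of homogeneous elements of `(m^{[e]} : τ) \ m^{[e]}`. -/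
def MeSet (k : Type*) [Field k] (n p : ℕ) (τ : Ideal (MvPolynomial (Fin (n + 1)) k))
    (e : ℕ) : Set ℕ :=
  {d : ℕ | ∃ g : MvPolynomial (Fin (n + 1)) k,
    g ∈ (bracketPow (mxI k n) (p ^ e)).colon τ ∧
    g ∉ bracketPow (mxI k n) (p ^ e) ∧ g.IsHomogeneous d}

/-- `M_e`: the minimal degree of a homogeneous element of `(m^{[e]} : τ) \ m^{[e]}`. -/
def Me (k : Type*) [Field k] (n p : ℕ) (τ : Ideal (MvPolynomial (Fin (n + 1)) k))
    (e : ℕ) : ℕ :=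
  sInf (MeSet k n p τ e)

/-- `e_0`: the least `e` with `τ ⊄ m^{[e]}`. -/
def e0 (k : Type*) [Field k] (n p : ℕ) (τ : Ideal (MvPolynomial (Fin (n + 1)) k)) : ℕ :=
  sInf {e : ℕ | ¬ τ ≤ bracketPow (mxI k n) (p ^ e)}

/-- In characteristic `p`, the bracket power of `m` is generated by the powers of the variables,
because the iterated Frobenius is a ring homomorphism. -/
theorem bracketPow_mxI_eq {k : Type*} [Field k] {p : ℕ} (n : ℕ) [Fact p.Prime] [CharP k p] (e : ℕ) :
    bracketPow (mxI k n) (p ^ e) =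
      Ideal.span ((fun s => monomial s (1 : k)) ''
        Set.range fun i : Fin (n + 1) => Finsupp.single i (p ^ e)) := by
  apply le_antisymm
  · have h : mxI k n ≤ (Ideal.span ((fun s => monomial s (1 : k)) ''
        Set.range fun i : Fin (n + 1) => Finsupp.single i (p ^ e))).comap
          (iterateFrobenius (MvPolynomial (Fin (n + 1)) k) p e) := by
      refine Ideal.span_le.2 ?_
      rintro _ ⟨i, rfl⟩
      rw [SetLike.mem_coe, Ideal.mem_comap, iterateFrobenius_def, X_pow_eq_monomial]
      exact Ideal.subset_span ⟨_, ⟨i, rfl⟩, rfl⟩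
    refine Ideal.span_le.2 ?_
    rintro _ ⟨u, hu, rfl⟩
    simpa only [SetLike.mem_coe, Ideal.mem_comap, iterateFrobenius_def] using h hu
  · refine Ideal.span_le.2 ?_
    rintro _ ⟨_, ⟨i, rfl⟩, rfl⟩
    refine Ideal.subset_span ⟨X i, Ideal.subset_span ⟨i, rfl⟩, ?_⟩
    exact X_pow_eq_monomial

theorem mem_bracketPow_mxI_iff {k : Type*} [Field k] {p n : ℕ} [Fact p.Prime] [CharP k p] (e : ℕ)
    (g : MvPolynomial (Fin (n + 1)) k) :
    g ∈ bracketPow (mxI k n) (p ^ e) ↔ ∀ s ∈ g.support, ∃ i, p ^ e ≤ s i := by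
  rw [bracketPow_mxI_eq, mem_ideal_span_monomial_image]
  simp [Finsupp.single_le_iff]

theorem prod_pow_mul_mem_iff {k : Type*} [Field k] {p n : ℕ} [Fact p.Prime] [CharP k p] (e : ℕ)
    (g : MvPolynomial (Fin (n + 1)) k) :
    (∏ i, X i : MvPolynomial (Fin (n + 1)) k) ^ (p ^ (e + 1) - p ^ e) * g ∈
        bracketPow (mxI k n) (p ^ (e + 1)) ↔ g ∈ bracketPow (mxI k n) (p ^ e) := by
  have hle : p ^ e ≤ p ^ (e + 1) := Nat.pow_le_pow_right (Fact.out : p.Prime).pos e.le_succ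
  generalize hc : p ^ (e + 1) - p ^ e = c
  have hmon : (∏ i, X i : MvPolynomial (Fin (n + 1)) k) ^ c =
      monomial (Finsupp.equivFunOnFinite.symm fun _ => c) 1 := by
    rw [monomial_eq, Finsupp.prod_fintype _ _ (by simp)]
    simp [Finset.prod_pow]
  rw [mem_bracketPow_mxI_iff, mem_bracketPow_mxI_iff, hmon]
  constructor
  · intro h s hs
    obtain ⟨i, hi⟩ := h (Finsupp.equivFunOnFinite.symm (fun _ => c) + s) (by
      rw [mem_support_iff, coeff_monomial_mul, one_mul]
      exact mem_support_iff.1 hs)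
    refine ⟨i, ?_⟩
    simp at hi
    omega
  · intro h s hs
    rw [mem_support_iff, coeff_monomial_mul'] at hs
    split_ifs at hs with hcs
    · rw [one_mul] at hs
      obtain ⟨i, hi⟩ := h _ (mem_support_iff.2 hs)
      have := hcs i
      refine ⟨i, ?_⟩
      simp at hi this
      omega
    · exact absurd rfl hs


/-- If `r` is homogeneous with `r ∈ (m^{[e]} : τ)` and `r ∉ m^{[e]}`, then
`(x_0⋯x_n)^{p^{e+1}−p^e}·r ∈ (m^{[e+1]} : τ)` and `(x_0⋯x_n)^{p^{e+1}−p^e}·r ∉ m^{[e+1]}`. -/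
theorem mul_prod_pow_mem_colon {k : Type*} [Field k] {p n : ℕ} [Fact p.Prime] [CharP k p]
    (f : MvPolynomial (Fin (n + 1)) k) (d : ℕ) (hf : f.IsHomogeneous d)
    (e : ℕ) (r : MvPolynomial (Fin (n + 1)) k) (dr : ℕ) (hr : r.IsHomogeneous dr)
    (h1 : r ∈ (bracketPow (mxI k n) (p ^ e)).colon (testIdeal p f 1))
    (h2 : r ∉ bracketPow (mxI k n) (p ^ e)) :
    (∏ i, X i : MvPolynomial (Fin (n + 1)) k) ^ (p ^ (e + 1) - p ^ e) * r ∈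
        (bracketPow (mxI k n) (p ^ (e + 1))).colon (testIdeal p f 1) ∧
      (∏ i, X i : MvPolynomial (Fin (n + 1)) k) ^ (p ^ (e + 1) - p ^ e) * r ∉
        bracketPow (mxI k n) (p ^ (e + 1)) := by
  refine ⟨?_, fun h => h2 ((prod_pow_mul_mem_iff e r).1 h)⟩
  rw [Submodule.mem_colon] at h1 ⊢
  intro t ht
  rw [smul_eq_mul, mul_assoc, prod_pow_mul_mem_iff]
  exact h1 t ht

end
end

section
/- Let f ∈ R be homogeneous and assume τ = τ(f^{1−1/p}) ⊆ m (i.e., (R/fR)_m is not F-pure). Then √τ = m (i.e., R/fR has an isolated non-F-pure point at m) if and only if the sequence M_e − (n+1)p^e is constant for all sufficiently large e; equivalently, since this sequence is nonincreasing, if and only if it is bounded below. -/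
/-!
Write `q = p ^ e` and let `Q` be the exponent `(q - 1, …, q - 1)`, so that `x^Q` spans the socle of
`R / m^{[e]}`; a polynomial lies in `m^{[e]}` iff its coefficients at all exponents `≤ Q` vanish
(`mem_bracketPow_mxI`).

* The sequence `M_e - (n+1) p^e` is nonincreasing, because multiplication by
  `(x_0 ⋯ x_n)^(p^(e+1) - p^e)` sends `(m^{[e]} : τ) \ m^{[e]}` into
  `(m^{[e+1]} : τ) \ m^{[e+1]}` (`Me_succ_le`).
* If `√τ = m`, then `m ^ N ⊆ τ` for some `N`. A form `g ∉ m^{[e]}` of degree less than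
  `(n+1)(q-1) - N` can be multiplied by a monomial of `m ^ N` so as to have a nonzero coefficient
  at `x^Q`, hence does not lie in `(m^{[e]} : τ)`. So the sequence is bounded below
  (`le_Me_of_pow_le`), and being nonincreasing it is eventually constant.
* If `√τ ≠ m`, then for each `D` some monomial of degree `D` is not in `τ`. Choose a linear
  functional vanishing on `τ` but not on that monomial. For `q > D` the perfect pairing
  `(g, u) ↦ coefficient of x^Q in g u` represents it in degree `D` by a form `g` of degree
  `(n+1)(q-1) - D`, and homogeneity of `τ` gives `g ∈ (m^{[e]} : τ) \ m^{[e]}`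
  (`Me_add_degree_le`). So the sequence is unbounded below (`exists_Me_lt`).

The last point needs `τ` to be homogeneous (`homogeneousComponent_mem_testIdeal`). Since `k[x]` is
free over its subring of `p`-th powers, with basis the products of a basis of `k` over `k^p` and
the monomials `x^α` with all `α_i < p`, the ideal `τ` is generated by the coordinates (`frobProj`)
of `f^(p-1)`, and these are homogeneous.
-/

open MvPolynomial

noncomputable section

/-! ### Frobenius splittings of the field and of the polynomial ring -/

universe u

/-- A basis of `k` over its subfield of `p`-th powers, in coordinates: elements `l i` and
`p⁻¹`-linear maps `φ i : k → k` with `c = ∑ l i * (φ i c) ^ p`, a finite sum for every `c`. -/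
lemma exists_frobenius_dual_basis (k : Type u) [Field k] (p : ℕ) [Fact p.Prime] [CharP k p] :
    ∃ (ι : Type u) (l : ι → k) (φ : ι → k →+ k),
      (∀ i c a, φ i (c ^ p * a) = c * φ i a) ∧
      ∀ c, ∃ I : Finset ι, ∀ J, I ⊆ J → ∑ i ∈ J, l i * φ i c ^ p = c := by
  classical
  let K := (frobenius k p).fieldRange
  let b := Module.Basis.ofVectorSpace K k
  let E : k ≃+* K := RingEquiv.ofBijective (frobenius k p).rangeRestrictField
    ⟨(frobenius k p).rangeRestrictField.injective,
      (frobenius k p).rangeRestrictField_bijective.2⟩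
  have hE : ∀ c, ((E c : K) : k) = c ^ p := fun c => rfl
  have hEs : ∀ z : K, (E.symm z) ^ p = (z : k) := fun z => by rw [← hE, E.apply_symm_apply]
  refine ⟨_, b, fun i => (E.symm : K ≃+* k).toAddMonoidHom.comp
    (b.coord i).toAddMonoidHom, ?_, ?_⟩
  · intro i c a
    have : c ^ p * a = (E c) • a := by rw [Subfield.smul_def, hE, smul_eq_mul]
    simp [this]
  · intro c
    refine ⟨(b.repr c).support, fun J hJ => ?_⟩
    conv_rhs => rw [← b.linearCombination_repr c, Finsupp.linearCombination_apply,
      Finsupp.sum_of_support_subset _ hJ _ (by simp)]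
    refine Finset.sum_congr rfl fun i _ => ?_
    simp [hEs, Subfield.smul_def, mul_comm]

section

variable {k : Type*} [Field k] {σ : Type*} {p : ℕ}

/-- The `p⁻¹`-linear projection of `k[x]` onto the summand of the monomials congruent to `x^α`
modulo `p`: it sends `∑ c_b x^b` to `∑ φ(c_{p s + α}) x^s`. -/
def frobProj (p : ℕ) (φ : k →+ k) (α : σ →₀ ℕ) (F : MvPolynomial σ k) : MvPolynomial σ k :=
  open Classical in
  ∑ s ∈ F.support.image (fun b => b.mapRange (· / p) (Nat.zero_div p)),
    monomial s (φ (coeff (p • s + α) F))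

lemma coeff_frobProj (φ : k →+ k) {α : σ →₀ ℕ} (hα : ∀ i, α i < p) (F : MvPolynomial σ k)
    (s : σ →₀ ℕ) : coeff s (frobProj p φ α F) = φ (coeff (p • s + α) F) := by
  classical
  simp only [frobProj, coeff_sum, coeff_monomial, Finset.sum_ite_eq']
  split_ifs with h
  · rfl
  · by_contra hne
    refine h (Finset.mem_image.2 ⟨p • s + α, ?_, ?_⟩)
    · rw [mem_support_iff]
      intro h0
      rw [h0, map_zero] at hne
      exact hne rfl
    · ext i
      have hp : 0 < p := (Nat.zero_le _).trans_lt (hα i)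
      simp [Nat.mul_add_div hp, Nat.div_eq_of_lt (hα i)]

lemma frobProj_add (φ : k →+ k) {α : σ →₀ ℕ} (hα : ∀ i, α i < p) (F G : MvPolynomial σ k) :
    frobProj p φ α (F + G) = frobProj p φ α F + frobProj p φ α G := by
  ext s
  simp [coeff_frobProj φ hα]

lemma frobProj_mul_pow [Fact p.Prime] [CharP k p] (φ : k →+ k)
    (hφ : ∀ c a, φ (c ^ p * a) = c * φ a) {α : σ →₀ ℕ} (hα : ∀ i, α i < p)
    (F u : MvPolynomial σ k) :
    frobProj p φ α (u ^ p * F) = u * frobProj p φ α F := by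
  classical
  have hp : 0 < p := (Fact.out : p.Prime).pos
  induction u using MvPolynomial.induction_on' with
  | add u v hu hv => rw [add_pow_char, add_mul, frobProj_add φ hα, hu, hv, add_mul]
  | monomial t c =>
    ext s
    rw [coeff_frobProj φ hα, monomial_pow, coeff_monomial_mul', coeff_monomial_mul',
      coeff_frobProj φ hα]
    have hiff : p • t ≤ p • s + α ↔ t ≤ s := by
      refine ⟨fun h i => ?_, fun h => (nsmul_le_nsmul_right h p).trans le_self_add⟩
      have h1 : p * t i ≤ p * s i + α i := by simpa using h i
      by_contra hlt
      have h2 : p * (s i + 1) ≤ p * t i := Nat.mul_le_mul_left p (by omega)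
      have := hα i
      rw [mul_add] at h2
      omega
    by_cases h : t ≤ s
    · rw [if_pos (hiff.2 h), if_pos h, hφ]
      congr 3
      ext i
      have h1 : p * t i ≤ p * s i := Nat.mul_le_mul_left p (h i)
      simp [Nat.mul_sub]
      omega
    · rw [if_neg (fun h' => h (hiff.1 h')), if_neg h, map_zero]

lemma frobProj_isHomogeneous (φ : k →+ k) {α : σ →₀ ℕ} (hα : ∀ i, α i < p)
    (hp : 0 < p) {F : MvPolynomial σ k} {D : ℕ} (hF : F.IsHomogeneous D) :
    (frobProj p φ α F).IsHomogeneous ((D - α.degree) / p) := by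
  intro s hs
  rw [coeff_frobProj φ hα] at hs
  have h1 : coeff (p • s + α) F ≠ 0 := fun h0 => hs (by rw [h0, map_zero])
  have h2 := hF h1
  rw [show α.degree = Finsupp.weight 1 α from
    DFunLike.congr_fun Finsupp.degree_eq_weight_one α, ← h2]
  simp [hp]

/-- Only the class `α` of `b` modulo `p` contributes to the coefficient of `x^b`. -/
lemma coeff_monomial_mul_frobProj_pow [Fact p.Prime] [CharP k p] (φ : k →+ k) {α : σ →₀ ℕ}
    (hα : ∀ i, α i < p) (F : MvPolynomial σ k) (c : k) (b : σ →₀ ℕ)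
    [Decidable (b.mapRange (· % p) (Nat.zero_mod p) = α)] :
    coeff b (monomial α c * frobProj p φ α F ^ p) =
      if b.mapRange (· % p) (Nat.zero_mod p) = α then c * φ (coeff b F) ^ p else 0 := by
  classical
  have hp : 0 < p := (Fact.out : p.Prime).pos
  rw [coeff_monomial_mul', ← map_frobenius_expand, coeff_map]
  split_ifs with h1 h2 h2
  · have hb : b - α = p • b.mapRange (· / p) (Nat.zero_div p) := by
      ext i
      have := Nat.mod_add_div (b i) p
      simp [← h2]
      omega
    have hb' : p • b.mapRange (· / p) (Nat.zero_div p) + α = b := by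
      rw [← hb, tsub_add_cancel_of_le h1]
    rw [hb, coeff_expand_smul _ hp.ne', coeff_frobProj φ hα, hb', frobenius_def]
  · obtain ⟨i, hi⟩ : ∃ i, b i % p ≠ α i := by
      by_contra! hc
      exact h2 (Finsupp.ext fun i => by simp [hc])
    rw [coeff_expand_of_not_dvd (i := i), map_zero, mul_zero]
    rintro ⟨r, hr⟩
    have h3 : α i ≤ b i := h1 i
    have h4 : b i = p * r + α i := by
      rw [← hr, Finsupp.tsub_apply]
      omega
    apply hi
    rw [h4, Nat.mul_add_mod, Nat.mod_eq_of_lt (hα i)]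
  · exact absurd (fun i => by simpa [← h2] using Nat.mod_le (b i) p) h1
  · rfl

/-- A polynomial lies in the bracket power of an ideal as soon as all its projections lie in the
ideal. -/
lemma mem_bracketPow_of_frobProj [Fact p.Prime] [CharP k p] {ι : Type*} (l : ι → k)
    (φ : ι → k →+ k)
    (hl : ∀ c, ∃ I : Finset ι, ∀ J, I ⊆ J → ∑ i ∈ J, l i * φ i c ^ p = c)
    (F : MvPolynomial σ k) (a : Ideal (MvPolynomial σ k))
    (ha : ∀ i (α : σ →₀ ℕ), (∀ j, α j < p) → frobProj p (φ i) α F ∈ a) :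
    F ∈ bracketPow a p := by
  classical
  have hp : 0 < p := (Fact.out : p.Prime).pos
  choose I hI using hl
  let r : (σ →₀ ℕ) → (σ →₀ ℕ) := fun b => b.mapRange (· % p) (Nat.zero_mod p)
  have hr : ∀ b i, r b i < p := fun b i => by simpa [r] using Nat.mod_lt _ hp
  let A := F.support.image r
  let J := F.support.biUnion fun b => I (coeff b F)
  have key : F = ∑ α ∈ A, ∑ i ∈ J, monomial α (l i) * frobProj p (φ i) α F ^ p := by
    ext b
    have h1 : coeff b (∑ α ∈ A, ∑ i ∈ J, monomial α (l i) * frobProj p (φ i) α F ^ p) =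
        ∑ α ∈ A, if r b = α then ∑ i ∈ J, l i * φ i (coeff b F) ^ p else 0 := by
      rw [coeff_sum]
      refine Finset.sum_congr rfl fun α hα => ?_
      obtain ⟨b', -, rfl⟩ := Finset.mem_image.1 hα
      rw [coeff_sum]
      simp_rw [coeff_monomial_mul_frobProj_pow _ (hr b')]
      split_ifs with h
      · rfl
      · simp
    rw [h1, Finset.sum_ite_eq]
    by_cases hb : b ∈ F.support
    · rw [if_pos (Finset.mem_image_of_mem r hb),
        hI _ J (Finset.subset_biUnion_of_mem (fun b => I (coeff b F)) hb)]
    · rw [notMem_support_iff.1 hb]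
      simp [hp.ne']
  rw [key]
  refine Ideal.sum_mem _ fun α hα => Ideal.sum_mem _ fun i _ => Ideal.mul_mem_left _ _ ?_
  obtain ⟨b', -, rfl⟩ := Finset.mem_image.1 hα
  exact Ideal.subset_span ⟨_, ha i _ (hr b'), rfl⟩

lemma frobProj_mem_of_mem_bracketPow [Fact p.Prime] [CharP k p] (φ : k →+ k)
    (hφ : ∀ c a, φ (c ^ p * a) = c * φ a) {α : σ →₀ ℕ} (hα : ∀ i, α i < p)
    {F : MvPolynomial σ k} {a : Ideal (MvPolynomial σ k)} (hF : F ∈ bracketPow a p) :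
    frobProj p φ α F ∈ a := by
  suffices h : ∀ r, frobProj p φ α (r * F) ∈ a by simpa using h 1
  induction hF using Submodule.span_induction with
  | mem x hx =>
    obtain ⟨u, hu, rfl⟩ := hx
    intro r
    rw [mul_comm, frobProj_mul_pow φ hφ hα]
    exact a.mul_mem_right _ hu
  | zero =>
    intro r
    have : frobProj p φ α (0 : MvPolynomial σ k) = 0 := by simp [frobProj]
    rw [mul_zero, this]
    exact a.zero_mem
  | add x y _ _ hx hy =>
    intro r
    rw [mul_add, frobProj_add φ hα]
    exact a.add_mem (hx r) (hy r)
  | smul s x _ hx =>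
    intro r
    rw [smul_eq_mul, ← mul_assoc]
    exact hx (r * s)

end

/-- The test ideal of a homogeneous polynomial is a homogeneous ideal. -/
lemma homogeneousComponent_mem_testIdeal {k : Type*} [Field k] {σ : Type*} {p : ℕ}
    [Fact p.Prime] [CharP k p] {f : MvPolynomial σ k} {d : ℕ} (hf : f.IsHomogeneous d)
    {t : MvPolynomial σ k} (ht : t ∈ testIdeal p f 1) (D : ℕ) :
    homogeneousComponent D t ∈ testIdeal p f 1 := by
  classical
  obtain ⟨ι, l, φ, hφ, hl⟩ := exists_frobenius_dual_basis k p
  rw [testIdeal, Submodule.mem_sInf] at ht ⊢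
  intro a ha
  rw [Set.mem_ofPred_eq, pow_one] at ha
  -- The ideal generated by the projections of `f ^ (p - 1)` is homogeneous, contained in `a`, and
  -- its bracket power still contains `f ^ (p - 1)`.
  let S : Set (MvPolynomial σ k) :=
    {g | ∃ i, ∃ α : σ →₀ ℕ, (∀ j, α j < p) ∧ frobProj p (φ i) α (f ^ (p - 1)) = g}
  have hSa : Ideal.span S ≤ a := by
    rw [Ideal.span_le]
    rintro _ ⟨i, α, hα, rfl⟩
    exact frobProj_mem_of_mem_bracketPow (φ i) (hφ i) hα ha
  have hS : t ∈ Ideal.span S := by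
    refine ht _ ?_
    rw [Set.mem_ofPred_eq, pow_one]
    exact mem_bracketPow_of_frobProj l φ hl _ _ fun i α hα => Ideal.subset_span ⟨i, α, hα, rfl⟩
  let _ := gradedAlgebra (σ := σ) (R := k)
  have hhom : (Ideal.span S).IsHomogeneous (homogeneousSubmodule σ k) := by
    refine Ideal.homogeneous_span _ _ ?_
    rintro _ ⟨i, α, hα, rfl⟩
    exact ⟨_, frobProj_isHomogeneous (φ i) hα (Fact.out : p.Prime).pos (hf.pow (p - 1))⟩
  exact hSa ((mem_iff_homogeneousComponent_mem hhom t).1 hS D)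

/-! ### Membership in the bracket powers of the maximal ideal -/

section

variable {k : Type*} [Field k] {n p : ℕ} [Fact p.Prime] [CharP k p]

lemma mem_bracketPow_mxI {e : ℕ} {g : MvPolynomial (Fin (n + 1)) k} :
    g ∈ bracketPow (mxI k n) (p ^ e) ↔ ∀ b, (∀ i, b i < p ^ e) → coeff b g = 0 := by
  have h1 : bracketPow (mxI k n) (p ^ e) =
      (mxI k n).map (iterateFrobenius (MvPolynomial (Fin (n + 1)) k) p e) := rfl
  have h2 : (mxI k n).map (iterateFrobenius (MvPolynomial (Fin (n + 1)) k) p e) =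
      Ideal.span ((fun s => monomial s (1 : k)) ''
        Set.range fun i : Fin (n + 1) => Finsupp.single i (p ^ e)) := by
    rw [mxI, Ideal.map_span, ← Set.range_comp, ← Set.range_comp]
    congr 2
    funext i
    simp [iterateFrobenius_def, X_pow_eq_monomial]
  rw [h1, h2, mem_ideal_span_monomial_image]
  simp only [Set.exists_range_iff, Finsupp.single_le_iff, mem_support_iff]
  refine forall_congr' fun b => ?_
  rw [← not_imp_not]
  push Not
  rfl

/-- The exponent `(q - 1, …, q - 1)` of the socle generator of `R / m^{[e]}`, where `q = p ^ e`. -/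
def socleExp (n q : ℕ) : Fin (n + 1) →₀ ℕ := Finsupp.equivFunOnFinite.symm fun _ => q - 1

@[simp]
lemma socleExp_apply (q : ℕ) (i : Fin (n + 1)) : socleExp n q i = q - 1 := rfl

lemma degree_socleExp (q : ℕ) : (socleExp n q).degree = (n + 1) * (q - 1) := by
  simp [Finsupp.degree_eq_sum]

lemma le_socleExp {q : ℕ} {b : Fin (n + 1) →₀ ℕ} (hb : ∀ i, b i < q) : b ≤ socleExp n q :=
  fun i => by have := hb i; simp; omega

lemma degree_sub_of_le {a b : Fin (n + 1) →₀ ℕ} (h : a ≤ b) :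
    (b - a).degree + a.degree = b.degree := by
  rw [← map_add, tsub_add_cancel_of_le h]

/-! ### Degrees of elements of the colon ideal -/

lemma MeSet_nonempty {τ : Ideal (MvPolynomial (Fin (n + 1)) k)} (hτ : τ ≤ mxI k n) (e : ℕ) :
    (MeSet k n p τ e).Nonempty := by
  classical
  have hq : 0 < p ^ e := pow_pos (Fact.out : p.Prime).pos e
  refine ⟨_, monomial (socleExp n (p ^ e)) 1, ?_, ?_, isHomogeneous_monomial _ rfl⟩
  · rw [Submodule.mem_colon]
    intro t ht
    rw [smul_eq_mul, mem_bracketPow_mxI]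
    intro b hb
    rw [coeff_monomial_mul']
    split_ifs with h
    · have h0 : b - socleExp n (p ^ e) = 0 := tsub_eq_zero_of_le (le_socleExp hb)
      have ht' : t ∈ idealOfVars (Fin (n + 1)) k ^ 1 := by
        rw [pow_one]
        exact hτ ht
      rw [mem_pow_idealOfVars_iff'] at ht'
      rw [h0, ht' 0 (by simp), mul_zero]
    · rfl
  · rw [mem_bracketPow_mxI]
    intro h
    have := h (socleExp n (p ^ e)) (fun i => by simp; omega)
    simp at this

/-- `M_e - (n+1) p^e` is nonincreasing: multiply by `(x_0 ⋯ x_n)^(p^(e+1) - p^e)`. -/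
lemma Me_succ_le {τ : Ideal (MvPolynomial (Fin (n + 1)) k)} (hτ : τ ≤ mxI k n) (e : ℕ) :
    Me k n p τ (e + 1) + (n + 1) * p ^ e ≤ Me k n p τ e + (n + 1) * p ^ (e + 1) := by
  classical
  have hq : 0 < p ^ e := pow_pos (Fact.out : p.Prime).pos e
  have hqq : p ^ e ≤ p ^ (e + 1) := Nat.pow_le_pow_right (Fact.out : p.Prime).pos (by omega)
  obtain ⟨g, hg1, hg2, hg3⟩ := Nat.sInf_mem (MeSet_nonempty (p := p) hτ e)
  -- `r + 1 = p ^ (e + 1) - p ^ e + 1`, so `socleExp n (r + 1)` has all entries `r`.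
  set r := p ^ (e + 1) - p ^ e with hr
  have hmem : (n + 1) * r + Me k n p τ e ∈ MeSet k n p τ (e + 1) := by
    refine ⟨monomial (socleExp n (r + 1)) 1 * g, ?_, ?_, ?_⟩
    · rw [Submodule.mem_colon] at hg1 ⊢
      intro t ht
      have h1 := mem_bracketPow_mxI.1 (hg1 t ht)
      rw [smul_eq_mul, mul_assoc, mem_bracketPow_mxI]
      intro b hb
      rw [coeff_monomial_mul']
      split_ifs with h
      · rw [one_mul]
        refine h1 _ fun i => ?_
        have h2 := hb i
        have h3 := h i
        simp only [Finsupp.tsub_apply, socleExp_apply] at h3 ⊢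
        omega
      · rfl
    · rw [mem_bracketPow_mxI] at hg2 ⊢
      intro h
      refine hg2 fun b hb => ?_
      have := h (socleExp n (r + 1) + b) fun i => by
        have := hb i
        simp only [Finsupp.add_apply, socleExp_apply]
        omega
      rwa [coeff_monomial_mul, one_mul] at this
    · refine (isHomogeneous_monomial (1 : k) ?_).mul hg3
      rw [degree_socleExp, Nat.add_sub_cancel]
  have hle : Me k n p τ (e + 1) ≤ (n + 1) * r + Me k n p τ e := Nat.sInf_le hmem
  have : (n + 1) * r + (n + 1) * p ^ e = (n + 1) * p ^ (e + 1) := by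
    rw [← mul_add, hr, Nat.sub_add_cancel hqq]
  omega

/-- If `m ^ N ⊆ τ`, an element of `(m^{[e]} : τ) \ m^{[e]}` cannot be multiplied into the socle by
a monomial of degree at least `N`. -/
lemma le_Me_of_pow_le {τ : Ideal (MvPolynomial (Fin (n + 1)) k)} (hτ : τ ≤ mxI k n) {N : ℕ}
    (hN : mxI k n ^ N ≤ τ) (e : ℕ) :
    (n + 1) * (p ^ e - 1) ≤ Me k n p τ e + N := by
  classical
  have hq : 0 < p ^ e := pow_pos (Fact.out : p.Prime).pos e
  obtain ⟨g, hg1, hg2, hg3⟩ := Nat.sInf_mem (MeSet_nonempty (p := p) hτ e)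
  rw [mem_bracketPow_mxI] at hg2
  push Not at hg2
  obtain ⟨b, hb, hgb⟩ := hg2
  have hdeg : b.degree = Me k n p τ e := by
    rw [Finsupp.degree_eq_weight_one]
    exact hg3 hgb
  by_contra! hlt
  have hle := le_socleExp hb
  have hd := degree_sub_of_le hle
  rw [degree_socleExp] at hd
  have hmem : monomial (socleExp n (p ^ e) - b) (1 : k) ∈ τ :=
    hN ((monomial_mem_pow_idealOfVars_iff N _ one_ne_zero).2 (by omega))
  have h1 := mem_bracketPow_mxI.1 (Submodule.mem_colon.1 hg1 _ hmem) (socleExp n (p ^ e))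
    fun i => by simp; omega
  rw [smul_eq_mul, coeff_mul_monomial', if_pos tsub_le_self, tsub_tsub_cancel_of_le hle,
    mul_one] at h1
  exact hgb h1

/-- Duality in `R / m^{[e]}`: a linear functional that vanishes on the homogeneous ideal `τ` but
not on the monomial `x^a` of degree `D` is, in degree `D`, multiplication by some `g` of
complementary degree followed by the coefficient of the socle monomial; this `g` lies in
`(m^{[e]} : τ) \ m^{[e]}`. -/
lemma Me_add_degree_le {τ : Ideal (MvPolynomial (Fin (n + 1)) k)}
    (hhom : ∀ t ∈ τ, ∀ D, homogeneousComponent D t ∈ τ) {a : Fin (n + 1) →₀ ℕ}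
    (ha : monomial a (1 : k) ∉ τ) {e : ℕ} (he : a.degree < p ^ e) :
    Me k n p τ e + a.degree ≤ (n + 1) * (p ^ e - 1) := by
  classical
  set D := a.degree with hD
  set Q := socleExp n (p ^ e) with hQ
  obtain ⟨φ, hφa, hφτ⟩ := Submodule.exists_le_ker_of_notMem (K := k)
    (p := τ.restrictScalars k) (v := monomial a (1 : k)) ha
  have hleQ : ∀ b : Fin (n + 1) →₀ ℕ, b.degree = D → b ≤ Q := fun b hb =>
    le_socleExp fun i => ((Finsupp.le_degree i b).trans_eq hb).trans_lt he
  let T : Finset (Fin (n + 1) →₀ ℕ) := Finset.finsuppAntidiag Finset.univ D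
  have hT : ∀ b, b ∈ T ↔ b.degree = D := fun b => by
    simp [T, Finset.mem_finsuppAntidiag, Finsupp.degree_eq_sum]
  let g : MvPolynomial (Fin (n + 1)) k := ∑ b ∈ T, monomial (Q - b) (φ (monomial b 1))
  have hg : ∀ u, coeff Q (g * u) = φ (homogeneousComponent D u) := by
    intro u
    have h1 : homogeneousComponent D u = ∑ b ∈ T, coeff b u • monomial b (1 : k) := by
      ext b
      simp only [coeff_homogeneousComponent, coeff_sum, coeff_smul, coeff_monomial, smul_eq_mul,
        mul_ite, mul_one, mul_zero, Finset.sum_ite_eq', hT]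
    rw [h1, map_sum, Finset.sum_mul, coeff_sum]
    refine Finset.sum_congr rfl fun b hb => ?_
    rw [coeff_monomial_mul', if_pos tsub_le_self, tsub_tsub_cancel_of_le (hleQ b ((hT b).1 hb)),
      map_smul, smul_eq_mul, mul_comm]
  have hmem : Q.degree - D ∈ MeSet k n p τ e := by
    refine ⟨g, ?_, ?_, ?_⟩
    · rw [Submodule.mem_colon]
      intro t ht
      rw [smul_eq_mul, mem_bracketPow_mxI]
      intro b hb
      have hbQ : b ≤ Q := le_socleExp hb
      have h1 : coeff Q (g * (monomial (Q - b) 1 * t)) = 0 := by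
        rw [hg]
        exact hφτ (hhom _ (τ.mul_mem_left _ ht) D)
      rwa [mul_left_comm, coeff_monomial_mul', if_pos tsub_le_self, one_mul,
        tsub_tsub_cancel_of_le hbQ] at h1
    · intro hgm
      have h1 := mem_bracketPow_mxI.1 (Ideal.mul_mem_right (monomial a (1 : k)) _ hgm) Q
        fun i => by simp [hQ]; omega
      rw [hg, homogeneousComponent_of_mem (isHomogeneous_monomial (1 : k) rfl), if_pos rfl] at h1
      exact hφa h1
    · refine IsHomogeneous.sum _ _ _ fun b hb => isHomogeneous_monomial _ ?_
      have := degree_sub_of_le (hleQ b ((hT b).1 hb))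
      rw [(hT b).1 hb] at this
      omega
  have h1 : Me k n p τ e ≤ Q.degree - D := Nat.sInf_le hmem
  have h2 := degree_sub_of_le (hleQ a rfl)
  rw [hQ, degree_socleExp] at *
  omega

end

lemma mxI_isRadical (k : Type*) [Field k] (n : ℕ) : (mxI k n).IsRadical := by
  have h : ∀ u, u ∈ mxI k n ↔ constantCoeff u = 0 := by
    intro u
    have := mem_pow_idealOfVars_iff' (R := k) (σ := Fin (n + 1)) 1 u
    rw [pow_one] at this
    rw [show mxI k n = idealOfVars _ k from rfl, this]
    simp [constantCoeff_eq, Finsupp.degree_eq_zero_iff]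
  rintro u ⟨j, hj⟩
  rw [h, map_pow] at hj
  exact (h u).2 (eq_zero_of_pow_eq_zero hj)

/-- If `√τ ≠ m` for a homogeneous ideal `τ ⊆ m`, then `M_e - (n+1) p^e` is unbounded below
on every tail. -/
lemma exists_Me_lt {k : Type*} [Field k] {n p : ℕ} [Fact p.Prime] [CharP k p]
    {τ : Ideal (MvPolynomial (Fin (n + 1)) k)} (hτ : τ ≤ mxI k n)
    (hhom : ∀ t ∈ τ, ∀ D, homogeneousComponent D t ∈ τ) (hrad : τ.radical ≠ mxI k n)
    (B : ℤ) (E : ℕ) :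
    ∃ e ≥ E, (Me k n p τ e : ℤ) - (n + 1) * p ^ e < B := by
  obtain ⟨a, ha, haτ⟩ : ∃ a : Fin (n + 1) →₀ ℕ, a.degree = B.natAbs ∧
      monomial a (1 : k) ∉ τ := by
    by_contra! hc
    refine hrad (le_antisymm ((mxI_isRadical k n).radical_le_iff.2 hτ) fun u hu => ?_)
    refine ⟨B.natAbs, ?_⟩
    have h1 : u ^ B.natAbs ∈ idealOfVars (Fin (n + 1)) k ^ B.natAbs := Ideal.pow_mem_pow hu _
    rw [pow_idealOfVars_eq_span] at h1
    refine Ideal.span_le.2 ?_ h1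
    rintro _ ⟨b, hb, rfl⟩
    exact hc b hb
  have hp1 := (Fact.out : p.Prime).one_lt
  refine ⟨max E a.degree, le_max_left _ _, ?_⟩
  set e := max E a.degree
  have he : a.degree < p ^ e := (le_max_right _ _).trans_lt (Nat.lt_pow_self hp1)
  have h1 := Me_add_degree_le (p := p) hhom haτ he
  have hq : 1 ≤ p ^ e := Nat.one_le_pow _ _ (by omega)
  zify [hq] at h1
  have h2 : -(a.degree : ℤ) ≤ B := by rw [ha]; omega
  nlinarith

/-- If `f` is homogeneous and `τ = τ(f^{1−1/p}) ⊆ m`, then `√τ = m` iff the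
sequence `M_e − (n+1)p^e` is eventually constant; equivalently, iff it is bounded below. -/
theorem isolated_nonFPure_iff_Me_eventually_constant {k : Type*} [Field k] {p n : ℕ}
    [Fact p.Prime] [CharP k p]
    (f : MvPolynomial (Fin (n + 1)) k) (d : ℕ) (hf : f.IsHomogeneous d)
    (hτ : testIdeal p f 1 ≤ mxI k n) :
    ((testIdeal p f 1).radical = mxI k n ↔
      ∃ c : ℤ, ∃ E : ℕ, ∀ e ≥ E,
        (Me k n p (testIdeal p f 1) e : ℤ) - (n + 1) * p ^ e = c) ∧
    ((testIdeal p f 1).radical = mxI k n ↔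
      ∃ B : ℤ, ∀ e ≥ e0 k n p (testIdeal p f 1),
        B ≤ (Me k n p (testIdeal p f 1) e : ℤ) - (n + 1) * p ^ e) := by
  have hhom : ∀ t ∈ testIdeal p f 1, ∀ D, homogeneousComponent D t ∈ testIdeal p f 1 :=
    fun t ht D => homogeneousComponent_mem_testIdeal hf ht D
  generalize testIdeal p f 1 = τ at hτ hhom ⊢
  set u : ℕ → ℤ := fun e => (Me k n p τ e : ℤ) - (n + 1) * p ^ e with hu
  have hanti : Antitone u := antitone_nat_of_succ_le fun e => by
    have := Me_succ_le (p := p) hτ e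
    zify at this
    simp only [hu]
    linarith
  have hbdd : τ.radical = mxI k n → ∃ B : ℤ, ∀ e, B ≤ u e := by
    intro hrad
    obtain ⟨N, hN⟩ := τ.exists_radical_pow_le_of_fg τ.radical.fg_of_isNoetherianRing
    rw [hrad] at hN
    refine ⟨-(n + 1) - N, fun e => ?_⟩
    have h1 := le_Me_of_pow_le (p := p) hτ hN e
    have hq : 1 ≤ p ^ e := Nat.one_le_pow _ _ (Fact.out : p.Prime).pos
    zify [hq] at h1
    simp only [hu]
    linarith
  refine ⟨⟨fun hrad => ?_, ?_⟩, ⟨fun hrad => ?_, ?_⟩⟩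
  · obtain ⟨B, hB⟩ := hbdd hrad
    let E := Function.argmin fun e => (u e - B).toNat
    refine ⟨u E, E, fun e he => ?_⟩
    have h1 : (u E - B).toNat ≤ (u e - B).toNat := Function.argmin_le (fun e => (u e - B).toNat) e
    have h2 := hanti he
    have h3 := hB e
    have h4 := hB E
    change u e = u E
    omega
  · rintro ⟨c, E, hc⟩
    by_contra hrad
    obtain ⟨e, he, hlt⟩ := exists_Me_lt (p := p) hτ hhom hrad c E
    exact hlt.ne (hc e he)
  · obtain ⟨B, hB⟩ := hbdd hrad
    exact ⟨B, fun e _ => hB e⟩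
  · rintro ⟨B, hB⟩
    by_contra hrad
    obtain ⟨e, he, hlt⟩ := exists_Me_lt (p := p) hτ hhom hrad B (e0 k n p τ)
    exact hlt.not_ge (hB e he)

end
end
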